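/- arXiv:1602.08021 — 2 statements merged into one kernel-verified Lean document; each statement's English description precedes it below -/
import Mathlib

section
/- Let (Ω, F, P) be a probability space, let (X_n)_{n∈ℕ} be an increasing sequence of sub-sigma-algebras of F, and let (v_n)_{n∈ℕ}, (χ_n)_{n∈ℕ}, (η_n)_{n∈ℕ}, (θ_n)_{n∈ℕ} be sequences of nonnegative integrable random variables such that v_n, χ_n, η_n, θ_n are X_n-measurable for every n, Σ_n χ_n < +∞ P-a.s., Σ_n η_n < +∞ P-a.s., and E[v_{n+1} | X_n] ≤ (1 + χ_n) v_n + η_n − θ_n P-a.s. for every n. Then Σ_{n∈ℕ} θ_n < +∞ P-a.s. and (v_n)_{n∈ℕ} converges P-a.s. to a [0,+∞[-valued random variable. -/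
/-!
Multiplying `v n` by `1 / ((1 + χ 0) ⋯ (1 + χ (n - 1)))` removes the multiplicative error, and since
this weight stays bounded away from `0` almost surely, nothing is lost. When `χ = 0`, the process
`∑ k < n, η k - v n` is a submartingale, and the increments of its predictable part dominate `θ`.
It converges by the martingale convergence theorem as soon as it is bounded above by an integrable
function, and then so does its predictable part, because the martingale part obeys the same bound.
Truncating when the sums of `η` exceed a level `M` provides such a bound, and almost every path is
left unchanged by the truncation for `M` large enough.
-/

open MeasureTheory Filter Topology

section Submartingale

variable {Ω : Type*} {mΩ : MeasurableSpace Ω} {μ : Measure Ω}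
  {ℱ : Filtration ℕ mΩ} {f : ℕ → Ω → ℝ} {Y : Ω → ℝ}

theorem eLpNorm_one_le_of_submartingale_le [SigmaFiniteFiltration μ ℱ]
    (hf : Submartingale f ℱ μ) (hY : Integrable Y μ) (hfY : ∀ n, f n ≤ᵐ[μ] Y) (n : ℕ) :
    eLpNorm (f n) 1 μ ≤ ENNReal.ofReal (2 * ∫ ω, |Y ω| ∂μ - ∫ ω, f 0 ω ∂μ) := by
  have abs_le : (fun ω ↦ ‖f n ω‖) ≤ᵐ[μ] fun ω ↦ 2 * |Y ω| - f n ω := by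
    filter_upwards [hfY n] with ω hω
    rw [Real.norm_eq_abs, abs_le']
    constructor <;> linarith [le_abs_self (Y ω), abs_nonneg (Y ω)]
  have integral_zero_le : ∫ ω, f 0 ω ∂μ ≤ ∫ ω, f n ω ∂μ := by
    simpa only [setIntegral_univ] using hf.setIntegral_le (Nat.zero_le n) MeasurableSet.univ
  have hY' : Integrable (fun ω ↦ 2 * |Y ω|) μ := hY.abs.const_mul 2
  rw [eLpNorm_one_eq_lintegral_enorm,
    ← ofReal_integral_norm_eq_lintegral_enorm (hf.integrable n)]
  refine ENNReal.ofReal_le_ofReal ?_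
  calc ∫ ω, ‖f n ω‖ ∂μ
      ≤ ∫ ω, (2 * |Y ω| - f n ω) ∂μ :=
        integral_mono_ae (hf.integrable n).norm (hY'.sub (hf.integrable n)) abs_le
    _ = 2 * ∫ ω, |Y ω| ∂μ - ∫ ω, f n ω ∂μ := by
        rw [integral_sub hY' (hf.integrable n), integral_const_mul]
    _ ≤ 2 * ∫ ω, |Y ω| ∂μ - ∫ ω, f 0 ω ∂μ := by gcongr

theorem ae_exists_tendsto_of_submartingale_le [IsFiniteMeasure μ] (hf : Submartingale f ℱ μ)
    (hY : Integrable Y μ) (hfY : ∀ n, f n ≤ᵐ[μ] Y) : ∀ᵐ ω ∂μ, ∃ c, Tendsto (f · ω) atTop (𝓝 c) :=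
  hf.exists_ae_tendsto_of_bdd (eLpNorm_one_le_of_submartingale_le hf hY hfY)

theorem ae_exists_tendsto_predictablePart_of_submartingale_le [IsFiniteMeasure μ]
    (hf : Submartingale f ℱ μ) (hY : Integrable Y μ) (hfY : ∀ n, f n ≤ᵐ[μ] Y) :
    ∀ᵐ ω ∂μ, ∃ c, Tendsto (predictablePart f ℱ μ · ω) atTop (𝓝 c) := by
  have martingalePart_le (n : ℕ) : martingalePart f ℱ μ n ≤ᵐ[μ] Y := by
    filter_upwards [hfY n, hf.predictablePart_nonneg] with ω hω hpred
    exact (sub_le_self _ (hpred n)).trans hω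
  have hmart := martingale_martingalePart (μ := μ) hf.stronglyAdapted hf.integrable
  filter_upwards [ae_exists_tendsto_of_submartingale_le hf hY hfY,
    ae_exists_tendsto_of_submartingale_le hmart.submartingale hY martingalePart_le]
    with ω ⟨a, ha⟩ ⟨b, hb⟩
  exact ⟨a - b, (ha.sub hb).congr fun n ↦ sub_sub_cancel (f n ω) (predictablePart f ℱ μ n ω)⟩

end Submartingale

section Weights

variable {Ω : Type*} {mΩ : MeasurableSpace Ω} {ℱ : Filtration ℕ mΩ}

@[to_additive]
theorem isStronglyPredictable_prod_range {M : Type*} [TopologicalSpace M] [CommMonoid M]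
    [ContinuousMul M] {u : ℕ → Ω → M} (hu : StronglyAdapted ℱ u) :
    IsStronglyPredictable ℱ fun n ω ↦ ∏ k ∈ Finset.range n, u k ω := by
  refine .of_measurable_add_one ?_ fun n ↦ ?_
  · simpa only [Finset.range_zero, Finset.prod_empty] using stronglyMeasurable_const
  · exact Finset.stronglyMeasurable_fun_prod _ fun k hk ↦
      hu.stronglyMeasurable_le (Finset.mem_range_succ_iff.1 hk)

/-- The indicator of the event that the first `n` terms of `η` sum to at most `c`. Multiplying by it
replaces a process by `0` once these partial sums exceed `c`. -/
noncomputable def truncationWeight (η : ℕ → Ω → ℝ) (c : ℝ) (n : ℕ) : Ω → ℝ :=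
  {ω | ∑ k ∈ Finset.range n, η k ω ≤ c}.indicator 1

section Truncation

variable {η : ℕ → Ω → ℝ} {c : ℝ} {ω : Ω}

theorem truncationWeight_nonneg (n : ℕ) (ω : Ω) : 0 ≤ truncationWeight η c n ω :=
  Set.indicator_nonneg (fun _ _ ↦ zero_le_one) ω

theorem truncationWeight_le_one (n : ℕ) (ω : Ω) : truncationWeight η c n ω ≤ 1 :=
  Set.indicator_le_self' (fun _ _ ↦ zero_le_one) ω

theorem truncationWeight_of_sum_le {n : ℕ} (h : ∑ k ∈ Finset.range n, η k ω ≤ c) :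
    truncationWeight η c n ω = 1 :=
  Set.indicator_of_mem (s := {ω | ∑ k ∈ Finset.range n, η k ω ≤ c}) h 1

theorem truncationWeight_of_lt_sum {n : ℕ} (h : c < ∑ k ∈ Finset.range n, η k ω) :
    truncationWeight η c n ω = 0 :=
  Set.indicator_of_notMem (s := {ω | ∑ k ∈ Finset.range n, η k ω ≤ c}) h.not_ge 1

theorem truncationWeight_succ_le {n : ℕ} (hη : 0 ≤ η n ω) :
    truncationWeight η c (n + 1) ω ≤ truncationWeight η c n ω := by
  rcases le_or_gt (∑ k ∈ Finset.range n, η k ω) c with hle | hlt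
  · rw [truncationWeight_of_sum_le hle]
    exact truncationWeight_le_one (n + 1) ω
  · have hlt' : c < ∑ k ∈ Finset.range (n + 1), η k ω := by
      rw [Finset.sum_range_succ]
      exact hlt.trans_le (le_add_of_nonneg_right hη)
    rw [truncationWeight_of_lt_sum hlt, truncationWeight_of_lt_sum hlt']

theorem sum_truncationWeight_mul_le (hc : 0 ≤ c) (hη : ∀ n, 0 ≤ η n ω) (n : ℕ) :
    ∑ k ∈ Finset.range n, truncationWeight η c (k + 1) ω * η k ω ≤ c := by
  induction n with
  | zero => simpa only [Finset.range_zero, Finset.sum_empty] using hc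
  | succ n ih =>
    rcases le_or_gt (∑ k ∈ Finset.range (n + 1), η k ω) c with hle | hlt
    · refine (Finset.sum_le_sum fun k _ ↦ ?_).trans hle
      exact mul_le_of_le_one_left (hη k) (truncationWeight_le_one (k + 1) ω)
    · rwa [Finset.sum_range_succ, truncationWeight_of_lt_sum hlt, zero_mul, add_zero]

theorem isStronglyPredictable_truncationWeight (hη : StronglyAdapted ℱ η) (c : ℝ) :
    IsStronglyPredictable ℱ (truncationWeight η c) := by
  have hsum := isStronglyPredictable_sum_range hη
  exact StronglyMeasurable.indicator stronglyMeasurable_one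
    (measurableSet_le hsum.measurable measurable_const)

end Truncation

/-- The weight `1 / ((1 + χ 0) ⋯ (1 + χ (n - 1)))`, which compensates the growth of a process by a
factor `1 + χ k` at each time `k < n`. -/
noncomputable def discountFactor (χ : ℕ → Ω → ℝ) (n : ℕ) (ω : Ω) : ℝ :=
  (∏ k ∈ Finset.range n, (1 + χ k ω))⁻¹

section Discount

variable {χ : ℕ → Ω → ℝ} {ω : Ω}

theorem discountFactor_pos (hχ : ∀ n, 0 ≤ χ n ω) (n : ℕ) : 0 < discountFactor χ n ω :=
  inv_pos.2 (Finset.prod_pos fun k _ ↦ add_pos_of_pos_of_nonneg one_pos (hχ k))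

theorem discountFactor_le_one (hχ : ∀ n, 0 ≤ χ n ω) (n : ℕ) : discountFactor χ n ω ≤ 1 :=
  inv_le_one_of_one_le₀ (Finset.one_le_prod fun k _ ↦ le_add_of_nonneg_right (hχ k))

theorem discountFactor_succ_mul {n : ℕ} (hχ : 0 ≤ χ n ω) :
    discountFactor χ (n + 1) ω * (1 + χ n ω) = discountFactor χ n ω := by
  rw [discountFactor, Finset.prod_range_succ, mul_inv]
  exact inv_mul_cancel_right₀ (add_pos_of_pos_of_nonneg one_pos hχ).ne' _

theorem tendsto_inv_discountFactor (hχ : Summable (χ · ω)) :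
    Tendsto (fun n ↦ (discountFactor χ n ω)⁻¹) atTop (𝓝 (∏' n, (1 + χ n ω))) := by
  simpa only [discountFactor, inv_inv] using
    (Real.multipliable_one_add_of_summable hχ).tendsto_prod_tprod_nat

theorem isStronglyPredictable_discountFactor (hχ : StronglyAdapted ℱ χ) :
    IsStronglyPredictable ℱ (discountFactor χ) := by
  have hprod := isStronglyPredictable_prod_range
    (u := fun n ω ↦ 1 + χ n ω) fun n ↦ stronglyMeasurable_const.add (hχ n)
  exact hprod.measurable.inv.stronglyMeasurable

end Discount
end Weights

theorem sum_range_succ_sub_sub_sum_range_sub {M : Type*} [AddCommGroup M] (a b : ℕ → M) (n : ℕ) :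
    (∑ k ∈ Finset.range (n + 1), a k - b (n + 1)) - (∑ k ∈ Finset.range n, a k - b n) =
      a n + b n - b (n + 1) := by
  rw [Finset.sum_range_succ]
  abel

/-- The almost supermartingales of Robbins and Siegmund: `v` is a nonnegative integrable process
satisfying the supermartingale inequality up to a multiplicative error `χ`, an additive error `η`
and a gain `θ`. The sign conditions are almost everywhere ones. -/
structure IsAlmostSupermartingale {Ω : Type*} {mΩ : MeasurableSpace Ω} (v χ η θ : ℕ → Ω → ℝ)
    (ℱ : Filtration ℕ mΩ) (μ : Measure Ω) : Prop where
  stronglyAdapted : StronglyAdapted ℱ v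
  stronglyAdapted_factor : StronglyAdapted ℱ χ
  stronglyAdapted_error : StronglyAdapted ℱ η
  integrable : ∀ n, Integrable (v n) μ
  nonneg : ∀ n, 0 ≤ᵐ[μ] v n
  factor_nonneg : ∀ n, 0 ≤ᵐ[μ] χ n
  error_nonneg : ∀ n, 0 ≤ᵐ[μ] η n
  gain_nonneg : ∀ n, 0 ≤ᵐ[μ] θ n
  condExp_le : ∀ n, μ[v (n + 1) | ℱ n] ≤ᵐ[μ] (1 + χ n) * v n + η n - θ n

namespace IsAlmostSupermartingale

variable {Ω : Type*} {mΩ : MeasurableSpace Ω} {μ : Measure Ω} {ℱ : Filtration ℕ mΩ}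
  {v χ η θ w : ℕ → Ω → ℝ} {Y : Ω → ℝ}

theorem mul_predictable (h : IsAlmostSupermartingale v χ η θ ℱ μ)
    (hw : IsStronglyPredictable ℱ w) (hw_nonneg : ∀ n, 0 ≤ᵐ[μ] w n)
    (hw_int : ∀ n, Integrable (w n * v n) μ)
    (hw_mul_le : ∀ n, w (n + 1) * (1 + χ n) ≤ᵐ[μ] w n) :
    IsAlmostSupermartingale (w * v) 0 (fun n ↦ w (n + 1) * η n) (fun n ↦ w (n + 1) * θ n) ℱ μ where
  stronglyAdapted := hw.stronglyAdapted.mul h.stronglyAdapted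
  stronglyAdapted_factor := stronglyAdapted_zero ℝ ℱ
  stronglyAdapted_error n := (hw.measurable_add_one n).mul (h.stronglyAdapted_error n)
  integrable := hw_int
  nonneg n := by
    filter_upwards [hw_nonneg n, h.nonneg n] with ω hwω hvω using mul_nonneg hwω hvω
  factor_nonneg _ := EventuallyLE.rfl
  error_nonneg n := by
    filter_upwards [hw_nonneg (n + 1), h.error_nonneg n] with ω hwω hηω using mul_nonneg hwω hηω
  gain_nonneg n := by
    filter_upwards [hw_nonneg (n + 1), h.gain_nonneg n] with ω hwω hθω using mul_nonneg hwω hθω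
  condExp_le n := by
    have pull_out : μ[w (n + 1) * v (n + 1) | ℱ n] =ᵐ[μ] w (n + 1) * μ[v (n + 1) | ℱ n] :=
      condExp_mul_of_stronglyMeasurable_left (hw.measurable_add_one n) (hw_int (n + 1))
        (h.integrable (n + 1))
    filter_upwards [pull_out, h.condExp_le n, hw_nonneg (n + 1), hw_mul_le n, h.nonneg n]
      with ω hpull hcond hwω hmul hvω
    simp only [Pi.mul_apply, Pi.add_apply, Pi.sub_apply, Pi.one_apply, Pi.zero_apply, add_zero,
      one_mul] at hpull hcond hwω hmul hvω ⊢
    calc μ[w (n + 1) * v (n + 1) | ℱ n] ω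
        = w (n + 1) ω * μ[v (n + 1) | ℱ n] ω := hpull
      _ ≤ w (n + 1) ω * ((1 + χ n ω) * v n ω + η n ω - θ n ω) := by gcongr
      _ = w (n + 1) ω * (1 + χ n ω) * v n ω + w (n + 1) ω * η n ω - w (n + 1) ω * θ n ω := by ring
      _ ≤ w n ω * v n ω + w (n + 1) ω * η n ω - w (n + 1) ω * θ n ω := by gcongr

section BoundedError

variable (h : IsAlmostSupermartingale v 0 η θ ℱ μ)
include h

theorem integrable_error_of_sum_le (hY : Integrable Y μ)
    (hηY : ∀ n, ∑ k ∈ Finset.range n, η k ≤ᵐ[μ] Y) (n : ℕ) : Integrable (η n) μ := by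
  refine hY.mono' ((h.stronglyAdapted_error n).mono (ℱ.le n)).aestronglyMeasurable ?_
  filter_upwards [hηY (n + 1), ae_all_iff.2 h.error_nonneg] with ω hω hη
  rw [Finset.sum_apply] at hω
  rw [Real.norm_of_nonneg (hη n)]
  exact (Finset.single_le_sum (fun k _ ↦ hη k) (Finset.self_mem_range_succ n)).trans hω

theorem gain_le_condExp_sub [SigmaFiniteFiltration μ ℱ] (hη_int : ∀ n, Integrable (η n) μ) (n : ℕ) :
    θ n ≤ᵐ[μ] μ[η n + v n - v (n + 1) | ℱ n] := by
  have hint : Integrable (η n + v n) μ := (hη_int n).add (h.integrable n)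
  have condExp_known : μ[η n + v n | ℱ n] = η n + v n :=
    condExp_of_stronglyMeasurable (ℱ.le n)
      ((h.stronglyAdapted_error n).add (h.stronglyAdapted n)) hint
  filter_upwards [condExp_sub hint (h.integrable (n + 1)) (ℱ n), h.condExp_le n] with ω hsub hcond
  rw [hsub, condExp_known]
  simp only [Pi.zero_apply, add_zero, one_mul, Pi.add_apply, Pi.sub_apply] at hcond ⊢
  linarith

theorem submartingale_sum_error_sub [IsFiniteMeasure μ] (hη_int : ∀ n, Integrable (η n) μ) :
    Submartingale (fun n ↦ ∑ k ∈ Finset.range n, η k - v n) ℱ μ := by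
  refine submartingale_of_condExp_sub_nonneg_nat (fun n ↦ ?_) (fun n ↦ ?_) fun n ↦ ?_
  · exact (Finset.stronglyMeasurable_sum _ fun k hk ↦
      h.stronglyAdapted_error.stronglyMeasurable_le (Finset.mem_range.1 hk).le).sub
        (h.stronglyAdapted n)
  · exact (integrable_finsetSum' _ fun k _ ↦ hη_int k).sub (h.integrable n)
  · rw [sum_range_succ_sub_sub_sum_range_sub]
    exact (h.gain_nonneg n).trans (h.gain_le_condExp_sub hη_int n)

theorem sum_gain_le_predictablePart [SigmaFiniteFiltration μ ℱ]
    (hη_int : ∀ n, Integrable (η n) μ) :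
    ∀ᵐ ω ∂μ, ∀ n, ∑ k ∈ Finset.range n, θ k ω ≤
      predictablePart (fun n ↦ ∑ k ∈ Finset.range n, η k - v n) ℱ μ n ω := by
  filter_upwards [ae_all_iff.2 (h.gain_le_condExp_sub hη_int)] with ω hω n
  simp only [predictablePart, sum_range_succ_sub_sub_sum_range_sub, Finset.sum_apply]
  exact Finset.sum_le_sum fun k _ ↦ hω k

theorem ae_summable_gain_and_tendsto_of_sum_error_le [IsFiniteMeasure μ] (hY : Integrable Y μ)
    (hηY : ∀ n, ∑ k ∈ Finset.range n, η k ≤ᵐ[μ] Y) :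
    ∀ᵐ ω ∂μ, Summable (θ · ω) ∧ ∃ c, Tendsto (v · ω) atTop (𝓝 c) := by
  have hη_int := h.integrable_error_of_sum_le hY hηY
  have hsub := h.submartingale_sum_error_sub hη_int
  have sub_le (n : ℕ) : ∑ k ∈ Finset.range n, η k - v n ≤ᵐ[μ] Y := by
    filter_upwards [hηY n, h.nonneg n] with ω hω hvω
    exact (sub_le_self _ hvω).trans hω
  filter_upwards [ae_exists_tendsto_of_submartingale_le hsub hY sub_le,
    ae_exists_tendsto_predictablePart_of_submartingale_le hsub hY sub_le,
    h.sum_gain_le_predictablePart hη_int, ae_all_iff.2 h.gain_nonneg, ae_all_iff.2 h.error_nonneg,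
    ae_all_iff.2 hηY] with ω ⟨c, hc⟩ ⟨d, hd⟩ hθd hθ hη hηY
  simp only [Pi.sub_apply, Finset.sum_apply] at hc hηY
  obtain ⟨B, hB⟩ := hd.bddAbove_range
  have summable_error : Summable (η · ω) := summable_of_sum_range_le hη hηY
  refine ⟨summable_of_sum_range_le hθ fun n ↦ (hθd n).trans (hB ⟨n, rfl⟩), _,
    (summable_error.hasSum.tendsto_sum_nat.sub hc).congr fun n ↦ sub_sub_cancel _ _⟩

end BoundedError

theorem mul_truncationWeight (h : IsAlmostSupermartingale v 0 η θ ℱ μ) (c : ℝ) :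
    IsAlmostSupermartingale (truncationWeight η c * v) 0
      (fun n ↦ truncationWeight η c (n + 1) * η n)
      (fun n ↦ truncationWeight η c (n + 1) * θ n) ℱ μ := by
  have hw := isStronglyPredictable_truncationWeight h.stronglyAdapted_error c
  refine h.mul_predictable hw (fun n ↦ .of_forall (truncationWeight_nonneg n)) (fun n ↦ ?_)
    fun n ↦ ?_
  · exact (h.integrable n).bdd_mul (c := 1)
      ((hw.stronglyAdapted n).mono (ℱ.le n)).aestronglyMeasurable
      (.of_forall fun ω ↦ (Real.norm_of_nonneg (truncationWeight_nonneg n ω)).trans_le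
        (truncationWeight_le_one n ω))
  · filter_upwards [h.error_nonneg n] with ω hω
    simpa using truncationWeight_succ_le hω

theorem ae_summable_gain_and_tendsto_of_summable_error [IsFiniteMeasure μ]
    (h : IsAlmostSupermartingale v 0 η θ ℱ μ) (hη_sum : ∀ᵐ ω ∂μ, Summable (η · ω)) :
    ∀ᵐ ω ∂μ, Summable (θ · ω) ∧ ∃ c, Tendsto (v · ω) atTop (𝓝 c) := by
  have truncated (M : ℕ) : ∀ᵐ ω ∂μ, Summable (fun n ↦ truncationWeight η M (n + 1) ω * θ n ω) ∧
      ∃ c, Tendsto (fun n ↦ truncationWeight η M n ω * v n ω) atTop (𝓝 c) := by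
    refine (h.mul_truncationWeight M).ae_summable_gain_and_tendsto_of_sum_error_le
      (integrable_const (M : ℝ)) fun n ↦ ?_
    filter_upwards [ae_all_iff.2 h.error_nonneg] with ω hη
    simpa only [Finset.sum_apply, Pi.mul_apply] using sum_truncationWeight_mul_le M.cast_nonneg hη n
  filter_upwards [ae_all_iff.2 truncated, hη_sum, ae_all_iff.2 h.error_nonneg] with ω hω hsum hη
  obtain ⟨M, hM⟩ := exists_nat_ge (∑' n, η n ω)
  have weight_eq_one (n : ℕ) : truncationWeight η M n ω = 1 :=
    truncationWeight_of_sum_le ((hsum.sum_le_tsum _ fun k _ ↦ hη k).trans hM)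
  simpa only [weight_eq_one, one_mul] using hω M

theorem mul_discountFactor (h : IsAlmostSupermartingale v χ η θ ℱ μ) :
    IsAlmostSupermartingale (discountFactor χ * v) 0 (fun n ↦ discountFactor χ (n + 1) * η n)
      (fun n ↦ discountFactor χ (n + 1) * θ n) ℱ μ := by
  have hw := isStronglyPredictable_discountFactor h.stronglyAdapted_factor
  have hχ := ae_all_iff.2 h.factor_nonneg
  refine h.mul_predictable hw (fun n ↦ ?_) (fun n ↦ ?_) fun n ↦ ?_
  · filter_upwards [hχ] with ω hω using (discountFactor_pos hω n).le
  · refine (h.integrable n).bdd_mul (c := 1)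
      ((hw.stronglyAdapted n).mono (ℱ.le n)).aestronglyMeasurable ?_
    filter_upwards [hχ] with ω hω
    exact (Real.norm_of_nonneg (discountFactor_pos hω n).le).trans_le (discountFactor_le_one hω n)
  · filter_upwards [hχ] with ω hω using (discountFactor_succ_mul (hω n)).le

theorem ae_summable_gain_and_tendsto [IsFiniteMeasure μ]
    (h : IsAlmostSupermartingale v χ η θ ℱ μ) (hχ_sum : ∀ᵐ ω ∂μ, Summable (χ · ω))
    (hη_sum : ∀ᵐ ω ∂μ, Summable (η · ω)) :
    ∀ᵐ ω ∂μ, Summable (θ · ω) ∧ ∃ c, Tendsto (v · ω) atTop (𝓝 c) := by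
  have hχ := ae_all_iff.2 h.factor_nonneg
  have discounted_summable : ∀ᵐ ω ∂μ, Summable fun n ↦ discountFactor χ (n + 1) ω * η n ω := by
    filter_upwards [hη_sum, hχ, ae_all_iff.2 h.error_nonneg] with ω hsum hω hη
    exact hsum.of_nonneg_of_le (fun n ↦ mul_nonneg (discountFactor_pos hω _).le (hη n))
      fun n ↦ mul_le_of_le_one_left (hη n) (discountFactor_le_one hω _)
  filter_upwards [h.mul_discountFactor.ae_summable_gain_and_tendsto_of_summable_error
    discounted_summable, hχ_sum, hχ] with ω ⟨hθ, c, hv⟩ hsum hω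
  have inv_tendsto := tendsto_inv_discountFactor hsum
  have undiscount (n : ℕ) (x : ℝ) : discountFactor χ n ω * x * (discountFactor χ n ω)⁻¹ = x := by
    rw [mul_right_comm, mul_inv_cancel₀ (discountFactor_pos hω n).ne', one_mul]
  refine ⟨?_, _, (hv.mul inv_tendsto).congr fun n ↦ undiscount n (v n ω)⟩
  have inv_tendsto_succ := inv_tendsto.comp (tendsto_add_atTop_nat 1)
  rw [← Nat.cofinite_eq_atTop] at inv_tendsto_succ
  exact (hθ.norm.mul_tendsto_const inv_tendsto_succ).congr fun n ↦ undiscount (n + 1) (θ n ω)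

theorem exists_measurable_nonneg_limit (h : IsAlmostSupermartingale v χ η θ ℱ μ)
    (hv : ∀ᵐ ω ∂μ, ∃ c, Tendsto (v · ω) atTop (𝓝 c)) :
    ∃ vlim : Ω → ℝ, Measurable vlim ∧ (∀ ω, 0 ≤ vlim ω) ∧
      ∀ᵐ ω ∂μ, Tendsto (v · ω) atTop (𝓝 (vlim ω)) := by
  obtain ⟨l, hl_meas, hl⟩ :=
    measurable_limit_of_tendsto_metrizable_ae (fun n ↦ (h.integrable n).aemeasurable) hv
  refine ⟨fun ω ↦ max (l ω) 0, hl_meas.max measurable_const, fun ω ↦ le_max_right _ _, ?_⟩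
  filter_upwards [hl, ae_all_iff.2 h.nonneg] with ω hω hvω
  have hl_nonneg : 0 ≤ l ω := ge_of_tendsto' hω hvω
  rwa [max_eq_left hl_nonneg]

end IsAlmostSupermartingale

theorem stmt6_general {Ω : Type*} {mΩ : MeasurableSpace Ω} {μ : Measure Ω} [IsFiniteMeasure μ]
    {ℱ : Filtration ℕ mΩ} {v χ η θ : ℕ → Ω → ℝ} (h : IsAlmostSupermartingale v χ η θ ℱ μ)
    (hχ_sum : ∀ᵐ ω ∂μ, Summable (χ · ω)) (hη_sum : ∀ᵐ ω ∂μ, Summable (η · ω)) :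
    (∀ᵐ ω ∂μ, Summable (θ · ω)) ∧
      ∃ vlim : Ω → ℝ, Measurable vlim ∧ (∀ ω, 0 ≤ vlim ω) ∧
        ∀ᵐ ω ∂μ, Tendsto (v · ω) atTop (𝓝 (vlim ω)) := by
  obtain ⟨summable_gain, tendsto_v⟩ :=
    eventually_and.1 (h.ae_summable_gain_and_tendsto hχ_sum hη_sum)
  exact ⟨summable_gain, h.exists_measurable_nonneg_limit tendsto_v⟩

theorem stmt6
    {Ω : Type*} [mΩ : MeasurableSpace Ω] (P : Measure Ω) [IsProbabilityMeasure P]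
    (𝒳 : ℕ → MeasurableSpace Ω)
    (h𝒳le : ∀ n, 𝒳 n ≤ mΩ)
    (h𝒳mono : ∀ n, 𝒳 n ≤ 𝒳 (n + 1))
    (v χ η θ : ℕ → Ω → ℝ)
    (hvpos : ∀ n ω, 0 ≤ v n ω) (hχpos : ∀ n ω, 0 ≤ χ n ω)
    (hηpos : ∀ n ω, 0 ≤ η n ω) (hθpos : ∀ n ω, 0 ≤ θ n ω)
    (hvint : ∀ n, Integrable (v n) P) (hχint : ∀ n, Integrable (χ n) P)
    (hηint : ∀ n, Integrable (η n) P) (hθint : ∀ n, Integrable (θ n) P)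
    (hvmeas : ∀ n, Measurable[𝒳 n] (v n)) (hχmeas : ∀ n, Measurable[𝒳 n] (χ n))
    (hηmeas : ∀ n, Measurable[𝒳 n] (η n)) (hθmeas : ∀ n, Measurable[𝒳 n] (θ n))
    (hχsum : ∀ᵐ ω ∂P, Summable fun n => χ n ω)
    (hηsum : ∀ᵐ ω ∂P, Summable fun n => η n ω)
    (hrec : ∀ n, ∀ᵐ ω ∂P,
      (P[v (n + 1) | 𝒳 n]) ω ≤ (1 + χ n ω) * v n ω + η n ω - θ n ω) :
    (∀ᵐ ω ∂P, Summable fun n => θ n ω) ∧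
    ∃ vlim : Ω → ℝ, Measurable vlim ∧ (∀ ω, 0 ≤ vlim ω) ∧
      ∀ᵐ ω ∂P, Filter.Tendsto (fun n => v n ω) Filter.atTop (nhds (vlim ω)) := by
  let ℱ : Filtration ℕ mΩ := ⟨𝒳, monotone_nat_of_le_succ h𝒳mono, h𝒳le⟩
  have h : IsAlmostSupermartingale v χ η θ ℱ P :=
    { stronglyAdapted := fun n ↦ (hvmeas n).stronglyMeasurable
      stronglyAdapted_factor := fun n ↦ (hχmeas n).stronglyMeasurable
      stronglyAdapted_error := fun n ↦ (hηmeas n).stronglyMeasurable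
      integrable := hvint
      nonneg := fun n ↦ .of_forall (hvpos n)
      factor_nonneg := fun n ↦ .of_forall (hχpos n)
      error_nonneg := fun n ↦ .of_forall (hηpos n)
      gain_nonneg := fun n ↦ .of_forall (hθpos n)
      condExp_le := hrec }
  exact stmt6_general h hχsum hηsum
end

section
/- Consider Problem 1 (deterministic setting). Let (λ_n)_{n∈ℕ} be a sequence in ]0,1] with inf_n λ_n > 0, let (γ_n)_{n∈ℕ} be a sequence in ]0, 2ϑ[ with inf_n γ_n > 0 and sup_n γ_n < 2ϑ, let x_0 ∈ H, and define x_{n+1} = x_n + λ_n ( prox_{γ_n f}( x_n − γ_n ∇g(x_n) ) − x_n ) for every n ∈ ℕ. Then (x_n)_{n∈ℕ} converges to a point in F, the set of minimizers of f + g. -/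
/-!
The iteration is a relaxed forward-backward splitting for the monotone inclusion `0 ∈ ∂f z + ∇g z`:
Fermat's rule turns minimizers of `f + g` into zeros of `∂f + ∇g` and a proximal step into a
resolvent step of `∂f`. By the Baillon–Haddad theorem `∇g` is `ϑ`-cocoercive, so each step decreases
the squared distance to every zero by at least a fixed multiple of the squared residual. Hence the
residuals vanish, and every cluster point is a zero because the graph of `∂f` is closed. The
distance to such a cluster point is nonincreasing and tends to zero along a subsequence, so the
whole sequence converges to it.
-/

open Filter Topology

noncomputable section

/-- `f` is a proper lower semicontinuous convex function from `H` to `]-∞,+∞]`. -/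
def ProperLscConvex {H : Type*} [NormedAddCommGroup H] [InnerProductSpace ℝ H]
    (f : H → EReal) : Prop :=
  (∀ x, f x ≠ ⊥) ∧ (∃ x, f x ≠ ⊤) ∧ LowerSemicontinuous f ∧
    ∀ x y : H, ∀ a b : ℝ, 0 ≤ a → 0 ≤ b → a + b = 1 →
      f (a • x + b • y) ≤ (a : EReal) * f x + (b : EReal) * f y

/-- `p` is the unique minimizer of `y ↦ f y + (1/(2γ))‖x - y‖²`, i.e. `p = prox_{γ f} x`. -/
def IsProx {H : Type*} [NormedAddCommGroup H] [InnerProductSpace ℝ H]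
    (f : H → EReal) (γ : ℝ) (x p : H) : Prop :=
  (∀ y, f p + ((1 / (2 * γ) * ‖x - p‖ ^ 2 : ℝ) : EReal)
      ≤ f y + ((1 / (2 * γ) * ‖x - y‖ ^ 2 : ℝ) : EReal)) ∧
  ∀ p' : H, (∀ y, f p' + ((1 / (2 * γ) * ‖x - p'‖ ^ 2 : ℝ) : EReal)
      ≤ f y + ((1 / (2 * γ) * ‖x - y‖ ^ 2 : ℝ) : EReal)) → p' = p

section FejerMonotone

theorem tendsto_zero_of_le_sub_succ {a r : ℕ → ℝ} (ha : BddBelow (Set.range a))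
    (hr : ∀ n, 0 ≤ r n) (hra : ∀ n, r n ≤ a n - a (n + 1)) : Tendsto r atTop (𝓝 0) := by
  have hanti : Antitone a := antitone_nat_of_succ_le fun n => by linarith [hr n, hra n]
  have hlim := tendsto_atTop_ciInf hanti ha
  refine squeeze_zero hr hra ?_
  simpa only [sub_self] using hlim.sub ((tendsto_add_atTop_iff_nat 1).2 hlim)

theorem tendsto_zero_of_mul_sq_le_sub_succ {a r : ℕ → ℝ} {κ : ℝ} (hκ : 0 < κ)
    (ha : BddBelow (Set.range a)) (hra : ∀ n, κ * r n ^ 2 ≤ a n - a (n + 1)) :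
    Tendsto r atTop (𝓝 0) := by
  have hmul := tendsto_zero_of_le_sub_succ ha (fun n => mul_nonneg hκ.le (sq_nonneg _)) hra
  have hsq : Tendsto (fun n => r n ^ 2) atTop (𝓝 0) := by
    simpa only [inv_mul_cancel_left₀ hκ.ne', mul_zero] using hmul.const_mul κ⁻¹
  refine (tendsto_zero_iff_abs_tendsto_zero r).2 ?_
  simpa only [Function.comp_def, Real.sqrt_sq_eq_abs, Real.sqrt_zero] using hsq.sqrt

theorem exists_tendsto_of_antitone_dist {X : Type*} [PseudoMetricSpace X] [ProperSpace X]
    {F : Set X} {x : ℕ → X} (hF : F.Nonempty)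
    (hx : ∀ z ∈ F, Antitone fun n => dist (x n) z)
    (hcluster : ∀ z, MapClusterPt z atTop x → z ∈ F) :
    ∃ z ∈ F, Tendsto x atTop (𝓝 z) := by
  obtain ⟨w, hw⟩ := hF
  have hbdd : ∀ n, x n ∈ Metric.closedBall w (dist (x 0) w) := fun n => hx w hw n.zero_le
  obtain ⟨z, -, hz⟩ := (isCompact_closedBall w (dist (x 0) w)).exists_mapClusterPt
    (tendsto_principal.2 (Eventually.of_forall hbdd) : map x atTop ≤ _)
  have hzF := hcluster z hz
  have hlim := tendsto_atTop_ciInf (hx z hzF) ⟨0, Set.forall_mem_range.2 fun n => dist_nonneg⟩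
  obtain ⟨U, hU, hxU⟩ := mapClusterPt_iff_ultrafilter.1 hz
  have hinf : ⨅ n, dist (x n) z = 0 :=
    tendsto_nhds_unique (hlim.mono_left hU) (tendsto_iff_dist_tendsto_zero.1 hxU)
  rw [hinf] at hlim
  exact ⟨z, hzF, tendsto_iff_dist_tendsto_zero.2 hlim⟩

theorem exists_tendsto_of_mul_sq_le_sq_dist_sub {X : Type*} [PseudoMetricSpace X] [ProperSpace X]
    {F : Set X} {x : ℕ → X} {r : ℕ → ℝ} {κ : ℝ} (hF : F.Nonempty) (hκ : 0 < κ)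
    (hx : ∀ z ∈ F, ∀ n, κ * r n ^ 2 ≤ dist (x n) z ^ 2 - dist (x (n + 1)) z ^ 2)
    (hcluster : Tendsto r atTop (𝓝 0) → ∀ z, MapClusterPt z atTop x → z ∈ F) :
    ∃ z ∈ F, Tendsto x atTop (𝓝 z) := by
  refine exists_tendsto_of_antitone_dist hF (fun z hz => antitone_nat_of_succ_le fun n => ?_)
    (hcluster ?_)
  · rw [← sq_le_sq₀ dist_nonneg dist_nonneg]
    linarith [hx z hz n, mul_nonneg hκ.le (sq_nonneg (r n))]
  · obtain ⟨z, hz⟩ := hF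
    exact tendsto_zero_of_mul_sq_le_sub_succ (a := fun n => dist (x n) z ^ 2) hκ
      ⟨0, Set.forall_mem_range.2 fun n => sq_nonneg _⟩ (hx z hz)

end FejerMonotone

section ForwardBackward

variable {H : Type*} [NormedAddCommGroup H] [InnerProductSpace ℝ H]

/-- Monotonicity of the set-valued operator `H → 2^H` whose graph is `A`. -/
def IsMonotoneGraph (A : Set (H × H)) : Prop :=
  ∀ ⦃x u y v⦄, (x, u) ∈ A → (y, v) ∈ A → 0 ≤ inner ℝ (u - v) (x - y)

/-- `ϑ`-cocoercivity of the single-valued operator `B` (also called inverse strong monotonicity). -/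
def IsCocoercive (ϑ : ℝ) (B : H → H) : Prop :=
  ∀ x y, ϑ * ‖B x - B y‖ ^ 2 ≤ inner ℝ (B x - B y) (x - y)

variable {A : Set (H × H)} {B : H → H} {ϑ : ℝ}

theorem IsCocoercive.lipschitzWith (hB : IsCocoercive ϑ B) (hϑ : 0 < ϑ) :
    LipschitzWith (Real.toNNReal ϑ⁻¹) B := by
  refine LipschitzWith.of_dist_le' fun x y => ?_
  rw [dist_eq_norm, dist_eq_norm, ← div_eq_inv_mul, le_div_iff₀' hϑ]
  have h := (hB x y).trans (real_inner_le_norm _ _)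
  rcases (norm_nonneg (B x - B y)).eq_or_lt with h0 | hpos
  · simp only [← h0, mul_zero, norm_nonneg]
  · exact le_of_mul_le_mul_left (by linarith) hpos

/-- One forward-backward step: `p = (Id + γA)⁻¹ (x - γ B x)`, written as an inclusion in the graph
`A` so that neither existence nor uniqueness of the resolvent has to be assumed. -/
def IsForwardBackwardStep (A : Set (H × H)) (B : H → H) (γ : ℝ) (x p : H) : Prop :=
  (p, γ⁻¹ • (x - γ • B x - p)) ∈ A

theorem isForwardBackwardStep_iff {γ : ℝ} (hγ : γ ≠ 0) {x p : H} :
    IsForwardBackwardStep A B γ x p ↔ (p, γ⁻¹ • (x - p) - B x) ∈ A := by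
  have h : γ⁻¹ • (x - γ • B x - p) = γ⁻¹ • (x - p) - B x := by
    rw [sub_right_comm, smul_sub, inv_smul_smul₀ hγ]
  rw [IsForwardBackwardStep, h]

theorem IsForwardBackwardStep.neg_le_inner {γ : ℝ} {x p z : H} (hϑ : 0 < ϑ)
    (hA : IsMonotoneGraph A) (hB : IsCocoercive ϑ B) (hγ : 0 < γ)
    (hp : IsForwardBackwardStep A B γ x p) (hz : (z, -B z) ∈ A) :
    -(γ / (4 * ϑ) * ‖x - p‖ ^ 2) ≤ inner ℝ (x - p) (p - z) := by
  have hmono : γ * inner ℝ (B x - B z) (p - z) ≤ inner ℝ (x - p) (p - z) := by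
    have h := hA ((isForwardBackwardStep_iff hγ.ne').1 hp) hz
    rw [show γ⁻¹ • (x - p) - B x - -B z = γ⁻¹ • (x - p) - (B x - B z) by abel, inner_sub_left,
      real_inner_smul_left, sub_nonneg, ← div_eq_inv_mul, le_div_iff₀' hγ] at h
    exact h
  have hyoung : inner ℝ (B x - B z) (x - p) ≤ ϑ * ‖B x - B z‖ ^ 2 + ‖x - p‖ ^ 2 / (4 * ϑ) := by
    have h : 0 ≤ ‖(2 * ϑ) • (B x - B z) - (x - p)‖ ^ 2 / (4 * ϑ) := by positivity
    rw [norm_sub_sq_real, norm_smul, real_inner_smul_left, mul_pow, Real.norm_eq_abs, sq_abs] at h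
    field_simp at h ⊢
    linarith
  have hsplit : inner ℝ (B x - B z) (x - z)
      = inner ℝ (B x - B z) (x - p) + inner ℝ (B x - B z) (p - z) := by
    rw [← inner_add_right, sub_add_sub_cancel]
  have hinner : -(‖x - p‖ ^ 2 / (4 * ϑ)) ≤ inner ℝ (B x - B z) (p - z) := by
    linarith [hB x z]
  calc -(γ / (4 * ϑ) * ‖x - p‖ ^ 2) = γ * -(‖x - p‖ ^ 2 / (4 * ϑ)) := by ring
    _ ≤ γ * inner ℝ (B x - B z) (p - z) := by gcongr
    _ ≤ inner ℝ (x - p) (p - z) := hmono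

theorem norm_add_smul_sub_sub_sq (l : ℝ) (x p z : H) :
    ‖x + l • (p - x) - z‖ ^ 2
      = ‖x - z‖ ^ 2 - l * (2 - l) * ‖x - p‖ ^ 2 - 2 * l * inner ℝ (x - p) (p - z) := by
  have hstep : x + l • (p - x) - z = (x - z) - l • (x - p) := by module
  have hinner : inner ℝ (x - z) (x - p) = ‖x - p‖ ^ 2 + inner ℝ (x - p) (p - z) := by
    rw [← sub_add_sub_cancel x p z, inner_add_left, real_inner_self_eq_norm_sq,
      real_inner_comm (x - p)]
  rw [hstep, norm_sub_sq_real, norm_smul, real_inner_smul_right, hinner, mul_pow,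
    Real.norm_eq_abs, sq_abs]
  ring

theorem IsForwardBackwardStep.norm_relaxed_sub_sq_le {γ l : ℝ} {x p z : H} (hϑ : 0 < ϑ)
    (hA : IsMonotoneGraph A) (hB : IsCocoercive ϑ B) (hγ : 0 < γ) (hl : 0 ≤ l)
    (hp : IsForwardBackwardStep A B γ x p) (hz : (z, -B z) ∈ A) :
    ‖x + l • (p - x) - z‖ ^ 2
      ≤ ‖x - z‖ ^ 2 - l * (2 - (l + γ / (2 * ϑ))) * ‖x - p‖ ^ 2 := by
  have h := mul_le_mul_of_nonneg_left (hp.neg_le_inner hϑ hA hB hγ hz) hl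
  have hhalf : γ / (2 * ϑ) = 2 * (γ / (4 * ϑ)) := by field_simp; norm_num
  rw [norm_add_smul_sub_sub_sq, hhalf]
  linarith

theorem neg_mem_of_tendsto_forwardBackward {ι : Type*} {l : Filter ι} [l.NeBot]
    {x p : ι → H} {γ : ι → ℝ} {ε : ℝ} {z : H} (hA : IsClosed A) (hB : ContinuousAt B z)
    (hε : 0 < ε) (hγ : ∀ i, ε ≤ γ i) (hp : ∀ i, IsForwardBackwardStep A B (γ i) (x i) (p i))
    (hx : Tendsto x l (𝓝 z)) (hres : Tendsto (fun i => x i - p i) l (𝓝 0)) :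
    (z, -B z) ∈ A := by
  have hpz : Tendsto p l (𝓝 z) := by
    simpa only [sub_sub_cancel, sub_zero] using hx.sub hres
  have hscaled : Tendsto (fun i => (γ i)⁻¹ • (x i - p i)) l (𝓝 0) := by
    refine squeeze_zero_norm (a := fun i => ε⁻¹ * ‖x i - p i‖) (fun i => ?_) ?_
    · rw [norm_smul, norm_inv, Real.norm_of_nonneg (hε.le.trans (hγ i))]
      gcongr
      exact hγ i
    · simpa only [norm_zero, mul_zero] using hres.norm.const_mul ε⁻¹
  have hdual : Tendsto (fun i => (γ i)⁻¹ • (x i - p i) - B (x i)) l (𝓝 (-B z)) := by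
    simpa only [zero_sub, Function.comp_def] using hscaled.sub (hB.tendsto.comp hx)
  exact hA.mem_of_tendsto (hpz.prodMk_nhds hdual) (Eventually.of_forall fun i =>
    (isForwardBackwardStep_iff (hε.trans_le (hγ i)).ne').1 (hp i))

theorem exists_tendsto_forwardBackward [FiniteDimensional ℝ H] (hϑ : 0 < ϑ)
    (hA : IsMonotoneGraph A) (hAclosed : IsClosed A) (hB : IsCocoercive ϑ B)
    (hzero : {z | (z, -B z) ∈ A}.Nonempty) {lam γ : ℕ → ℝ}
    (hlam : ∃ ε > (0 : ℝ), ∀ n, ε ≤ lam n) (hγ : ∃ ε > (0 : ℝ), ∀ n, ε ≤ γ n)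
    (hsup : ∃ c < (2 : ℝ), ∀ n, lam n + γ n / (2 * ϑ) ≤ c) {x p : ℕ → H}
    (hp : ∀ n, IsForwardBackwardStep A B (γ n) (x n) (p n))
    (hrec : ∀ n, x (n + 1) = x n + lam n • (p n - x n)) :
    ∃ z, (z, -B z) ∈ A ∧ Tendsto x atTop (𝓝 z) := by
  obtain ⟨l₀, hl₀, hl⟩ := hlam
  obtain ⟨γ₀, hγ₀, hγge⟩ := hγ
  obtain ⟨c, hc, hlc⟩ := hsup
  have hdecrease : ∀ z ∈ {z | (z, -B z) ∈ A}, ∀ n, l₀ * (2 - c) * ‖x n - p n‖ ^ 2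
      ≤ dist (x n) z ^ 2 - dist (x (n + 1)) z ^ 2 := fun z hz n => by
    have hln : 0 ≤ lam n := hl₀.le.trans (hl n)
    have hstep := (hp n).norm_relaxed_sub_sq_le hϑ hA hB (hγ₀.trans_le (hγge n)) hln hz
    have hcoeff : l₀ * (2 - c) ≤ lam n * (2 - (lam n + γ n / (2 * ϑ))) :=
      mul_le_mul (hl n) (sub_le_sub_left (hlc n) 2) (sub_pos.2 hc).le hln
    rw [← hrec] at hstep
    rw [dist_eq_norm, dist_eq_norm]
    linarith [mul_le_mul_of_nonneg_right hcoeff (sq_nonneg ‖x n - p n‖)]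
  refine exists_tendsto_of_mul_sq_le_sq_dist_sub hzero (mul_pos hl₀ (sub_pos.2 hc)) hdecrease
    fun hres z hz => ?_
  obtain ⟨U, hU, hxU⟩ := mapClusterPt_iff_ultrafilter.1 hz
  exact neg_mem_of_tendsto_forwardBackward hAclosed (hB.lipschitzWith hϑ).continuous.continuousAt
    hγ₀ hγge hp hxU ((tendsto_zero_iff_norm_tendsto_zero.2 hres).mono_left hU)

end ForwardBackward

section Gradient

variable {H : Type*} [NormedAddCommGroup H] [InnerProductSpace ℝ H] [CompleteSpace H]
  {g : H → ℝ} {g' : H → H}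

theorem hasDerivAt_comp_lineMap_of_hasGradientAt {v x y : H} {t : ℝ}
    (hg : HasGradientAt g v (AffineMap.lineMap x y t)) :
    HasDerivAt (fun s : ℝ => g (AffineMap.lineMap x y s)) (inner ℝ v (y - x)) t :=
  hg.hasFDerivAt.comp_hasDerivAt t AffineMap.hasDerivAt_lineMap

theorem add_inner_le_of_convexOn_of_hasGradientAt {v x : H} (hconv : ConvexOn ℝ Set.univ g)
    (hg : HasGradientAt g v x) (y : H) : g x + inner ℝ v (y - x) ≤ g y := by
  have hline : ConvexOn ℝ Set.univ fun s : ℝ => g (AffineMap.lineMap x y s) :=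
    hconv.comp_affineMap (AffineMap.lineMap x y)
  have hderiv : HasDerivAt (fun s : ℝ => g (AffineMap.lineMap x y s)) (inner ℝ v (y - x)) 0 :=
    hasDerivAt_comp_lineMap_of_hasGradientAt (by rwa [AffineMap.lineMap_apply_zero])
  have h := hline.le_slope_of_hasDerivAt (Set.mem_univ 0) (Set.mem_univ 1) one_pos hderiv
  rw [slope_def_field, AffineMap.lineMap_apply_zero, AffineMap.lineMap_apply_one, sub_zero,
    div_one] at h
  linarith

theorem le_add_inner_add_sq_of_lipschitzWith_gradient {K : NNReal}
    (hg : ∀ x, HasGradientAt g (g' x) x) (hlip : LipschitzWith K g') (x y : H) :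
    g y ≤ g x + inner ℝ (g' x) (y - x) + K / 2 * ‖y - x‖ ^ 2 := by
  let φ : ℝ → ℝ := fun s => g (AffineMap.lineMap x y s) - s * inner ℝ (g' x) (y - x)
    - s ^ 2 * (K / 2 * ‖y - x‖ ^ 2)
  have hφ : ∀ t, HasDerivAt φ (inner ℝ (g' (AffineMap.lineMap x y t)) (y - x)
      - inner ℝ (g' x) (y - x) - 2 * t * (K / 2 * ‖y - x‖ ^ 2)) t := fun t => by
    have hlin := (hasDerivAt_id t).mul_const (inner ℝ (g' x) (y - x))
    have hsq := (hasDerivAt_pow 2 t).mul_const (K / 2 * ‖y - x‖ ^ 2)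
    refine (((hasDerivAt_comp_lineMap_of_hasGradientAt (hg _)).sub hlin).sub hsq).congr_deriv ?_
    simp
  have hinner : ∀ t : ℝ, 0 ≤ t →
      inner ℝ (g' (AffineMap.lineMap x y t) - g' x) (y - x) ≤ K * t * ‖y - x‖ ^ 2 := fun t ht =>
    calc inner ℝ (g' (AffineMap.lineMap x y t) - g' x) (y - x)
        ≤ ‖g' (AffineMap.lineMap x y t) - g' x‖ * ‖y - x‖ := real_inner_le_norm _ _
      _ ≤ K * ‖AffineMap.lineMap x y t - x‖ * ‖y - x‖ := by gcongr; exact hlip.norm_sub_le _ _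
      _ = K * t * ‖y - x‖ ^ 2 := by
        rw [AffineMap.lineMap_apply_module', add_sub_cancel_right, norm_smul,
          Real.norm_of_nonneg ht]
        ring
  have hanti : AntitoneOn φ (Set.Icc 0 1) :=
    antitoneOn_of_hasDerivWithinAt_nonpos (convex_Icc 0 1)
      (fun t _ => (hφ t).continuousAt.continuousWithinAt)
      (fun t _ => (hφ t).hasDerivWithinAt) fun t ht => by
        have h := hinner t (interior_subset ht).1
        rw [inner_sub_left] at h
        linarith
  have h := hanti (Set.left_mem_Icc.2 zero_le_one) (Set.right_mem_Icc.2 zero_le_one) zero_le_one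
  simp only [φ, AffineMap.lineMap_apply_zero, AffineMap.lineMap_apply_one] at h
  linarith

/- The descent lemma at `x` and the gradient inequality at `z` are compared at the point
`x - ϑ (∇g x - ∇g z)`, which minimizes the upper bound minus the lower one. -/
theorem add_inner_add_sq_le_of_convexOn_of_lipschitzWith_gradient {ϑ : ℝ} (hϑ : 0 < ϑ)
    (hconv : ConvexOn ℝ Set.univ g) (hg : ∀ x, HasGradientAt g (g' x) x)
    (hlip : LipschitzWith (Real.toNNReal ϑ⁻¹) g') (x z : H) :
    g z + inner ℝ (g' z) (x - z) + ϑ / 2 * ‖g' x - g' z‖ ^ 2 ≤ g x := by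
  set u := g' x - g' z
  have hupper := le_add_inner_add_sq_of_lipschitzWith_gradient hg hlip x (x - ϑ • u)
  have hlower := add_inner_le_of_convexOn_of_hasGradientAt hconv (hg z) (x - ϑ • u)
  have hquad : ϑ⁻¹ / 2 * (ϑ * ‖u‖) ^ 2 = ϑ / 2 * ‖u‖ ^ 2 := by field_simp
  have hself : inner ℝ (g' x) u - inner ℝ (g' z) u = ‖u‖ ^ 2 := by
    rw [← inner_sub_left, real_inner_self_eq_norm_sq]
  rw [Real.coe_toNNReal _ (inv_nonneg.2 hϑ.le), sub_sub_cancel_left, norm_neg, norm_smul,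
    Real.norm_of_nonneg hϑ.le, hquad, inner_neg_right, real_inner_smul_right] at hupper
  rw [sub_right_comm, inner_sub_right, real_inner_smul_right] at hlower
  linear_combination hupper + hlower - ϑ * hself

theorem isCocoercive_of_convexOn_of_lipschitzWith_gradient {ϑ : ℝ} (hϑ : 0 < ϑ)
    (hconv : ConvexOn ℝ Set.univ g) (hg : ∀ x, HasGradientAt g (g' x) x)
    (hlip : LipschitzWith (Real.toNNReal ϑ⁻¹) g') :
    IsCocoercive ϑ g' := fun x z => by
  have hxz := add_inner_add_sq_le_of_convexOn_of_lipschitzWith_gradient hϑ hconv hg hlip x z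
  have hzx := add_inner_add_sq_le_of_convexOn_of_lipschitzWith_gradient hϑ hconv hg hlip z x
  rw [norm_sub_rev, ← neg_sub x z, inner_neg_right] at hzx
  rw [inner_sub_left]
  linarith

end Gradient

section Subdifferential

variable {H : Type*} [NormedAddCommGroup H] [InnerProductSpace ℝ H] {f : H → EReal}

/-- The graph of the Moreau subdifferential `∂f`. If `f` is not identically `⊤`, membership of
`(x, u)` forces `f x ≠ ⊤`, so no separate domain condition is imposed. -/
def subdifferentialGraph (f : H → EReal) : Set (H × H) :=
  {xu | ∀ y, f xu.1 + (inner ℝ xu.2 (y - xu.1) : ℝ) ≤ f y}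

theorem isClosed_subdifferentialGraph (hf : LowerSemicontinuous f) :
    IsClosed (subdifferentialGraph f) := by
  simp only [subdifferentialGraph, Set.ofPred_forall]
  refine isClosed_iInter fun y => LowerSemicontinuous.isClosed_preimage ?_ (f y)
  have hinner : Continuous fun xu : H × H => ((inner ℝ xu.2 (y - xu.1) : ℝ) : EReal) :=
    continuous_coe_real_ereal.comp (by fun_prop)
  exact (hf.comp continuous_fst).add' hinner.lowerSemicontinuous fun xu =>
    EReal.continuousAt_add (.inr (EReal.coe_ne_bot _)) (.inr (EReal.coe_ne_top _))

namespace ProperLscConvex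

theorem exists_coe_eq_of_mem_subdifferentialGraph (hf : ProperLscConvex f) {x u : H}
    (hu : (x, u) ∈ subdifferentialGraph f) : ∃ a : ℝ, (a : EReal) = f x := by
  obtain ⟨hbot, ⟨y, hy⟩, -⟩ := hf
  refine ⟨(f x).toReal, EReal.coe_toReal (fun hx => hy ?_) (hbot x)⟩
  have h := hu y
  rwa [hx, EReal.top_add_coe, top_le_iff] at h

theorem isMonotoneGraph_subdifferentialGraph (hf : ProperLscConvex f) :
    IsMonotoneGraph (subdifferentialGraph f) := fun x u y v hu hv => by
  obtain ⟨a, ha⟩ := hf.exists_coe_eq_of_mem_subdifferentialGraph hu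
  obtain ⟨b, hb⟩ := hf.exists_coe_eq_of_mem_subdifferentialGraph hv
  have hxy : f x + (inner ℝ u (y - x) : ℝ) ≤ f y := hu y
  have hyx : f y + (inner ℝ v (x - y) : ℝ) ≤ f x := hv x
  rw [← ha, ← hb] at hxy hyx
  norm_cast at hxy hyx
  rw [← neg_sub x y, inner_neg_right] at hxy
  rw [inner_sub_left]
  linarith

variable [CompleteSpace H]

theorem neg_mem_subdifferentialGraph_of_isMin (hf : ProperLscConvex f) {q : H → ℝ} {v z : H}
    (hq : HasGradientAt q v z) (hz : ∀ y, f z + (q z : EReal) ≤ f y + (q y : EReal)) :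
    (z, -v) ∈ subdifferentialGraph f := fun y => by
  obtain ⟨hbot, -, -, hconv⟩ := hf
  rcases eq_or_ne (f y) ⊤ with hy | hy
  · exact hy ▸ le_top
  have hzy := hz y
  have hzconv : ∀ t ∈ Set.Ioc (0 : ℝ) 1, f z + (q z : EReal) ≤
      ((1 - t : ℝ) * f z + (t : ℝ) * f y) + (q (AffineMap.lineMap z y t) : EReal) := fun t ht => by
    refine (hz (AffineMap.lineMap z y t)).trans (add_le_add_left ?_ _)
    rw [AffineMap.lineMap_apply_module]
    exact hconv z y (1 - t) t (sub_nonneg.2 ht.2) ht.1.le (sub_add_cancel 1 t)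
  lift f y to ℝ using ⟨hy, hbot y⟩ with b
  have hz_top : f z ≠ ⊤ := fun h => by
    rw [h, EReal.top_add_coe, top_le_iff] at hzy
    exact EReal.coe_ne_top (b + q y) (by exact_mod_cast hzy)
  change f z + (inner ℝ (-v) (y - z) : ℝ) ≤ b
  lift f z to ℝ using ⟨hz_top, hbot z⟩ with a
  have hderiv : HasDerivAt (fun t : ℝ => q (AffineMap.lineMap z y t)) (inner ℝ v (y - z)) 0 :=
    hasDerivAt_comp_lineMap_of_hasGradientAt (by rwa [AffineMap.lineMap_apply_zero])
  have hslope : a - b ≤ inner ℝ v (y - z) := by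
    refine ge_of_tendsto hderiv.tendsto_slope_zero_right ?_
    filter_upwards [Ioc_mem_nhdsGT one_pos] with t ht
    have h : a + q z ≤ (1 - t) * a + t * b + q (AffineMap.lineMap z y t) := by
      exact_mod_cast hzconv t ht
    rw [zero_add, AffineMap.lineMap_apply_zero, smul_eq_mul, le_inv_mul_iff₀ ht.1]
    linarith
  rw [inner_neg_left]
  norm_cast
  linarith

theorem neg_mem_subdifferentialGraph_iff_isMin (hf : ProperLscConvex f) {g : H → ℝ} {v z : H}
    (hconv : ConvexOn ℝ Set.univ g) (hg : HasGradientAt g v z) :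
    (z, -v) ∈ subdifferentialGraph f ↔ ∀ y, f z + (g z : EReal) ≤ f y + (g y : EReal) := by
  refine ⟨fun hz y => ?_, hf.neg_mem_subdifferentialGraph_of_isMin hg⟩
  have hgy : g z ≤ inner ℝ (-v) (y - z) + g y := by
    rw [inner_neg_left]
    linarith [add_inner_le_of_convexOn_of_hasGradientAt hconv hg y]
  calc f z + (g z : EReal) ≤ f z + ((inner ℝ (-v) (y - z) + g y : ℝ) : EReal) := by
        gcongr
    _ = f z + (inner ℝ (-v) (y - z) : ℝ) + (g y : EReal) := by rw [EReal.coe_add, add_assoc]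
    _ ≤ f y + (g y : EReal) := by gcongr; exact hz y

end ProperLscConvex

theorem hasGradientAt_const_mul_norm_sub_sq [CompleteSpace H] (γ : ℝ) (x p : H) :
    HasGradientAt (fun y => 1 / (2 * γ) * ‖x - y‖ ^ 2) (-(γ⁻¹ • (x - p))) p := by
  rw [hasGradientAt_iff_hasFDerivAt]
  refine ((((hasFDerivAt_id p).const_sub x).norm_sq).const_mul (1 / (2 * γ))).congr_fderiv ?_
  ext y
  simp only [one_div, mul_inv_rev, id_eq, map_sub, ContinuousLinearMap.comp_neg,
    ContinuousLinearMap.comp_id, neg_sub, smul_apply, sub_apply, coe_innerSL_apply, nsmul_eq_mul,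
    Nat.cast_ofNat, smul_eq_mul, map_neg, map_smul, neg_apply,
    InnerProductSpace.toDual_apply_apply]
  ring

theorem IsProx.mem_subdifferentialGraph [CompleteSpace H] (hf : ProperLscConvex f) {γ : ℝ}
    {x p : H} (hp : IsProx f γ x p) : (p, γ⁻¹ • (x - p)) ∈ subdifferentialGraph f := by
  simpa only [neg_neg] using
    hf.neg_mem_subdifferentialGraph_of_isMin (hasGradientAt_const_mul_norm_sub_sq γ x p) hp.1

end Subdifferential

theorem stmt8_general
    {H : Type*} [NormedAddCommGroup H] [InnerProductSpace ℝ H] [FiniteDimensional ℝ H]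
    {f : H → EReal} (hf : ProperLscConvex f) {ϑ : ℝ} (hϑ : 0 < ϑ)
    {g : H → ℝ} (hgconv : ConvexOn ℝ Set.univ g)
    {g' : H → H} (hg' : ∀ x, HasGradientAt g (g' x) x)
    (hglip : LipschitzWith (Real.toNNReal ϑ⁻¹) g')
    {F : Set H} (hF : F = {z : H | ∀ y : H, f z + (g z : EReal) ≤ f y + (g y : EReal)})
    (hFne : F.Nonempty) {lam γ : ℕ → ℝ}
    (hlaminf : ∃ ε > (0 : ℝ), ∀ n, ε ≤ lam n) (hγinf : ∃ ε > (0 : ℝ), ∀ n, ε ≤ γ n)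
    (hsup : ∃ c < (2 : ℝ), ∀ n, lam n + γ n / (2 * ϑ) ≤ c) {x p : ℕ → H}
    (hp : ∀ n, IsProx f (γ n) (x n - γ n • g' (x n)) (p n))
    (hrec : ∀ n, x (n + 1) = x n + lam n • (p n - x n)) :
    ∃ xlim ∈ F, Tendsto x atTop (𝓝 xlim) := by
  have hzeros : F = {z | (z, -g' z) ∈ subdifferentialGraph f} :=
    hF.trans (Set.ext fun z => (hf.neg_mem_subdifferentialGraph_iff_isMin hgconv (hg' z)).symm)
  rw [hzeros] at hFne ⊢
  exact exists_tendsto_forwardBackward hϑ hf.isMonotoneGraph_subdifferentialGraph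
    (isClosed_subdifferentialGraph hf.2.2.1)
    (isCocoercive_of_convexOn_of_lipschitzWith_gradient hϑ hgconv hg' hglip)
    hFne hlaminf hγinf hsup (fun n => (hp n).mem_subdifferentialGraph hf) hrec

theorem exists_lt_two_forall_add_div_le {ι : Type*} {ϑ : ℝ} (hϑ : 0 < ϑ) {lam γ : ι → ℝ}
    (hlam : ∀ i, lam i ≤ 1) (hγ : ∃ c < 2 * ϑ, ∀ i, γ i ≤ c) :
    ∃ c < (2 : ℝ), ∀ i, lam i + γ i / (2 * ϑ) ≤ c := by
  obtain ⟨c, hc, hγc⟩ := hγ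
  have hratio : c / (2 * ϑ) < 1 := (div_lt_one (by positivity)).2 hc
  refine ⟨1 + c / (2 * ϑ), by linarith, fun i => ?_⟩
  gcongr
  exacts [hlam i, hγc i]

theorem stmt8
    {H : Type*} [NormedAddCommGroup H] [InnerProductSpace ℝ H] [FiniteDimensional ℝ H]
    -- Problem 1 data
    (f : H → EReal) (hf : ProperLscConvex f)
    (ϑ : ℝ) (hϑ : 0 < ϑ)
    (g : H → ℝ) (hgconv : ConvexOn ℝ Set.univ g)
    (g' : H → H) (hg' : ∀ x, HasGradientAt g (g' x) x)
    (hglip : LipschitzWith (Real.toNNReal ϑ⁻¹) g')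
    (F : Set H) (hF : F = {z : H | ∀ y : H, f z + (g z : EReal) ≤ f y + (g y : EReal)})
    (hFne : F.Nonempty)
    -- deterministic forward-backward iteration
    (lam γ : ℕ → ℝ)
    (hlam : ∀ n, lam n ∈ Set.Ioc (0 : ℝ) 1)
    (hlaminf : ∃ ε > (0 : ℝ), ∀ n, ε ≤ lam n)
    (hγ : ∀ n, γ n ∈ Set.Ioo (0 : ℝ) (2 * ϑ))
    (hγinf : ∃ ε > (0 : ℝ), ∀ n, ε ≤ γ n)
    (hγsup : ∃ c < 2 * ϑ, ∀ n, γ n ≤ c)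
    (proxf : ℕ → H → H) (hproxf : ∀ n y, IsProx f (γ n) y (proxf n y))
    (x : ℕ → H)
    (hrec : ∀ n, x (n + 1)
        = x n + lam n • (proxf n (x n - γ n • g' (x n)) - x n)) :
    ∃ xlim ∈ F, Filter.Tendsto x Filter.atTop (nhds xlim) :=
  stmt8_general hf hϑ hgconv hg' hglip hF hFne hlaminf hγinf
    (exists_lt_two_forall_add_div_le hϑ (fun n => (hlam n).2) hγsup) (fun n => hproxf n _) hrec
end
end
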